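/- Let ℳ = {M₁,…,M_l} be a Morse decomposition of an attractor 𝒜 with Morse filtration ∅ = A₀ ⊆ A₁ ⊆ … ⊆ A_l = 𝒜. Then: (1) for each k, (A_{k-1}, M_k) is an attractor–repeller pair in A_k, i.e., A_{k-1} is an attractor in A_k and M_k is its dual repeller in A_k; (2) the sets M_k are pairwise disjoint, weakly invariant, and compact; (3) if γ : ℝ → 𝒜 is a complete solution of the inclusion lying in 𝒜, then either γ(ℝ) ⊆ M_k for some k, or there exist indices i < j with α(γ) ⊆ M_j and ω(γ) ⊆ M_i; (4) A_k = ∪_{1 ≤ i ≤ k} W^u(M_i) for 1 ≤ k ≤ l, where W^u(M_i) = {x : there is a complete solution γ : ℝ → 𝒜 with γ(0) = x and α(γ) ⊆ M_i}. -/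

import Mathlib

open Set Filter Topology MeasureTheory Metric Pointwise

namespace DI

/-- The phase space `X = ℝ^m`. -/
abbrev X (m : ℕ) := EuclideanSpace ℝ (Fin m)

variable {m : ℕ}

/-- Standing assumptions (H1)–(H2): `F x` is a nonempty convex compact set for every `x`,
and `F` is upper semicontinuous (as a set-valued map). -/
def Standing (F : X m → Set (X m)) : Prop :=
  (∀ x, (F x).Nonempty ∧ Convex ℝ (F x) ∧ IsCompact (F x)) ∧
  (∀ x, ∀ ε > 0, ∃ δ > 0, ∀ y, dist y x < δ → F y ⊆ Metric.thickening ε (F x))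

/-- `γ` is a solution of the differential inclusion `x' ∈ F x` on the set `I`:
it is an indefinite integral (hence absolutely continuous on compact subintervals)
of an integrable selection `g` with `g u ∈ F (γ u)` for a.e. `u ∈ I`. -/
def IsSolOn (F : X m → Set (X m)) (γ : ℝ → X m) (I : Set ℝ) : Prop :=
  ∃ g : ℝ → X m,
    (∀ s ∈ I, ∀ t ∈ I, IntervalIntegrable g volume s t ∧ γ t = γ s + ∫ u in s..t, g u) ∧
    (∀ᵐ u ∂(volume.restrict I), g u ∈ F (γ u))

/-- The reachable set `ℛ(t)x` of the inclusion `x' ∈ F x`. -/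
def reach (F : X m → Set (X m)) (t : ℝ) (x : X m) : Set (X m) :=
  {y | ∃ γ : ℝ → X m, IsSolOn F γ (Icc 0 t) ∧ γ 0 = x ∧ γ t = y}

/-- `ℛ(t)A`. -/
def reachSet (F : X m → Set (X m)) (t : ℝ) (A : Set (X m)) : Set (X m) :=
  ⋃ x ∈ A, reach F t x

/-- No solution starting in `B` blows up on `[0,T]`: every solution on a subinterval
`[0,s] ⊆ [0,T]` starting in `B` extends to a solution on `[0,T]`. -/
def NoBlowupUpTo (F : X m → Set (X m)) (B : Set (X m)) (T : ℝ) : Prop :=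
  ∀ s ∈ Icc (0:ℝ) T, ∀ γ : ℝ → X m, IsSolOn F γ (Icc 0 s) → γ 0 ∈ B →
    ∃ γ' : ℝ → X m, IsSolOn F γ' (Icc 0 T) ∧ EqOn γ' γ (Icc 0 s)

/-- No solution starting in `B` blows up in finite time. -/
def NoBlowup (F : X m → Set (X m)) (B : Set (X m)) : Prop :=
  ∀ T > 0, NoBlowupUpTo F B T

/-- `A` attracts `B` (in the strong sense): no solution from `B` blows up in finite
time and `d_H(ℛ(t)B, A) → 0` as `t → ∞`. -/
def Attracts (F : X m → Set (X m)) (A B : Set (X m)) : Prop :=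
  NoBlowup F B ∧
  ∀ ε > 0, ∃ T : ℝ, ∀ t ≥ T, ∀ y ∈ reachSet F t B, Metric.infDist y A < ε

/-- The attraction basin `Ω(A)`. -/
def basin (F : X m → Set (X m)) (A : Set (X m)) : Set (X m) :=
  {x | Attracts F A {x}}

/-- `A` is positively invariant. -/
def PosInvariant (F : X m → Set (X m)) (A : Set (X m)) : Prop :=
  ∀ t ≥ (0:ℝ), reachSet F t A ⊆ A

/-- `A` is invariant. -/
def Invariant (F : X m → Set (X m)) (A : Set (X m)) : Prop :=
  ∀ t ≥ (0:ℝ), reachSet F t A = A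

/-- The ω-limit set `ω(A)`. -/
def omegaLim (F : X m → Set (X m)) (A : Set (X m)) : Set (X m) :=
  {y | ∃ (t : ℕ → ℝ) (p : ℕ → X m), Tendsto t atTop atTop ∧
    (∀ n, p n ∈ reachSet F (t n) A) ∧ Tendsto p atTop (𝓝 y)}

/-- `𝒜` is an attractor: a compact set admitting a neighborhood `U` with `ω(U) = 𝒜`. -/
def IsAttractor (F : X m → Set (X m)) (𝒜 : Set (X m)) : Prop :=
  IsCompact 𝒜 ∧ ∃ U : Set (X m), 𝒜 ⊆ interior U ∧ omegaLim F U = 𝒜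

/-- `O` is an attractor neighborhood of `𝒜`: a positively invariant neighborhood of `𝒜`
contained in the attraction basin `Ω(𝒜)`. -/
def IsAttractorNbhd (F : X m → Set (X m)) (𝒜 O : Set (X m)) : Prop :=
  𝒜 ⊆ interior O ∧ PosInvariant F O ∧ O ⊆ basin F 𝒜

/-- The attraction basin of `A` in `U`: `Ω^U(A) = Ω(A) ∩ {x ∈ U : ℛ(t)x ⊆ U ∀ t ≥ 0}`. -/
def basinIn (F : X m → Set (X m)) (U A : Set (X m)) : Set (X m) :=
  basin F A ∩ {x ∈ U | ∀ t ≥ (0:ℝ), reach F t x ⊆ U}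

/-- The right-hand side of the inflated inclusion:
`clconv F(x + δ B̄₁) + δ B̄₁`. -/
def inflate (F : X m → Set (X m)) (δ : ℝ) (x : X m) : Set (X m) :=
  closure (convexHull ℝ (⋃ y ∈ Metric.closedBall x δ, F y)) +
    Metric.closedBall (0 : X m) δ

/-- `S` is weakly invariant: through every point of `S` passes a complete
solution contained in `S`. -/
def WeaklyInvariant (F : X m → Set (X m)) (S : Set (X m)) : Prop :=
  ∀ x ∈ S, ∃ γ : ℝ → X m, IsSolOn F γ univ ∧ γ 0 = x ∧ range γ ⊆ S

/-- `A` is an attractor in `𝒜`: compact, `A ⊆ 𝒜`, and `ω(U ∩ 𝒜) = A` for some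
neighborhood `U` of `A`. -/
def IsAttractorIn (F : X m → Set (X m)) (𝒜 A : Set (X m)) : Prop :=
  IsCompact A ∧ A ⊆ 𝒜 ∧ ∃ U : Set (X m), A ⊆ interior U ∧ omegaLim F (U ∩ 𝒜) = A

/-- The dual repeller `A* = {x ∈ 𝒜 : ω(x) ∖ A ≠ ∅}` of `A` in `𝒜`. -/
def dualRepeller (F : X m → Set (X m)) (𝒜 A : Set (X m)) : Set (X m) :=
  {x ∈ 𝒜 | (omegaLim F {x} \ A).Nonempty}

/-- The ω-limit set of a complete solution. -/
def omegaOf (γ : ℝ → X m) : Set (X m) :=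
  {y | ∃ t : ℕ → ℝ, Tendsto t atTop atTop ∧ Tendsto (fun n => γ (t n)) atTop (𝓝 y)}

/-- The α-limit set of a complete solution. -/
def alphaOf (γ : ℝ → X m) : Set (X m) :=
  {y | ∃ t : ℕ → ℝ, Tendsto t atTop atBot ∧ Tendsto (fun n => γ (t n)) atTop (𝓝 y)}

/-- The unstable set `W^u(S)` (within `𝒜`). -/
def unstableSet (F : X m → Set (X m)) (𝒜 S : Set (X m)) : Set (X m) :=
  {x | ∃ γ : ℝ → X m, IsSolOn F γ univ ∧ range γ ⊆ 𝒜 ∧ γ 0 = x ∧ alphaOf γ ⊆ S}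

/-- `A 0 ⊆ A 1 ⊆ ⋯ ⊆ A l` is a Morse filtration of the attractor `𝒜`. -/
def IsMorseFiltration (F : X m → Set (X m)) (𝒜 : Set (X m)) (l : ℕ)
    (A : ℕ → Set (X m)) : Prop :=
  A 0 = ∅ ∧ A l = 𝒜 ∧ (∀ k < l, A k ⊆ A (k+1)) ∧ ∀ k ≤ l, IsAttractorIn F 𝒜 (A k)

/-- `M 1, …, M l` is a Morse decomposition of the attractor `𝒜`. -/
def IsMorseDecomposition (F : X m → Set (X m)) (𝒜 : Set (X m)) (l : ℕ)
    (M : ℕ → Set (X m)) : Prop :=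
  (∀ k, 1 ≤ k → k ≤ l → IsCompact (M k) ∧ M k ⊆ 𝒜) ∧
  ∃ A : ℕ → Set (X m), IsMorseFiltration F 𝒜 l A ∧
    ∀ k, 1 ≤ k → k ≤ l → M k = A k ∩ dualRepeller F 𝒜 (A (k-1))

/-- `V` is radially unbounded (class `𝒦∞`) on the open set `U`. -/
def RadiallyUnbounded (U : Set (X m)) (V : X m → ℝ) : Prop :=
  ∀ R > (0:ℝ), ∃ K : Set (X m), K ⊆ U ∧ IsCompact K ∧ ∀ x ∈ U \ K, V x > R

/-- `V` is locally Lipschitz on `O`. -/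
def LocallyLipschitzOn (O : Set (X m)) (V : X m → ℝ) : Prop :=
  ∀ x ∈ O, ∃ ε > (0:ℝ), ∃ L : NNReal, LipschitzOnWith L V (Metric.ball x ε ∩ O)

/-- The set-valued map `F` is locally Lipschitz:
`F x ⊆ F y + L‖x - y‖ B̄₁` on compact sets. -/
def LocallyLipschitzMap (F : X m → Set (X m)) : Prop :=
  ∀ K : Set (X m), IsCompact K → ∃ L > (0:ℝ), ∀ x ∈ K, ∀ y ∈ K,
    F x ⊆ F y + Metric.closedBall (0 : X m) (L * ‖x - y‖)

/-- The Dini supderivative `D⁺_v V(x) = limsup_{τ→0⁺} (V(x+τv) - V x)/τ`. -/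
noncomputable def diniSup (V : X m → ℝ) (x v : X m) : ℝ :=
  limsup (fun τ : ℝ => (V (x + τ • v) - V x) / τ) (𝓝[>] 0)

/-- `A` is a strong deformation retract of `Y`. -/
def IsSDR (A Y : Set (X m)) : Prop :=
  A ⊆ Y ∧ ∃ H : ℝ × X m → X m, ContinuousOn H (Icc (0:ℝ) 1 ×ˢ Y) ∧
    (∀ σ ∈ Icc (0:ℝ) 1, ∀ y ∈ Y, H (σ, y) ∈ Y) ∧
    (∀ y ∈ Y, H (0, y) = y) ∧ (∀ y ∈ Y, H (1, y) ∈ A) ∧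
    (∀ σ ∈ Icc (0:ℝ) 1, ∀ a ∈ A, H (σ, a) = a)

/-- `V` is a Morse–Lyapunov function of the Morse decomposition `M` of `𝒜` on the
attraction basin `Ω(𝒜)`: continuous, constant on each Morse set, and strictly
decreasing along solutions lying in `Ω(𝒜) ∖ 𝒟`, where `𝒟 = ⋃ₖ M k`. -/
def IsMLFunction (F : X m → Set (X m)) (𝒜 : Set (X m)) (l : ℕ) (M : ℕ → Set (X m))
    (V : X m → ℝ) : Prop :=
  ContinuousOn V (basin F 𝒜) ∧
  (∀ k, 1 ≤ k → k ≤ l → ∃ c : ℝ, ∀ x ∈ M k, V x = c) ∧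
  (∀ a b : ℝ, ∀ γ : ℝ → X m, IsSolOn F γ (Icc a b) →
    (∀ t ∈ Icc a b, γ t ∈ basin F 𝒜 \ ⋃ k ∈ Icc 1 l, M k) →
    StrictAntiOn (fun t => V (γ t)) (Icc a b))

/-- A strict Morse–Lyapunov function: in addition `V(M i) < V(M j)` whenever
`i < j` and both Morse sets are nonempty. -/
def IsStrictML (F : X m → Set (X m)) (𝒜 : Set (X m)) (l : ℕ) (M : ℕ → Set (X m))
    (V : X m → ℝ) : Prop :=
  IsMLFunction F 𝒜 l M V ∧
  ∀ i j, 1 ≤ i → i < j → j ≤ l → ∀ x ∈ M i, ∀ y ∈ M j, V x < V y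

/-!
The analytic input is a compactness principle: a pointwise ultralimit of solutions of inclusions
converging upper semicontinuously to `F` solves `x' ∈ F x`, because its difference quotients at a
differentiability point stay in every closed neighbourhood of the convex set `F x`. Applied to
Picard solutions of smooth approximate selections it gives local existence; applied to ever longer
pieces of solutions it shows that a compact `ω`-limit set of the form `ω(B)` with `ω(B) ⊆ B` is
invariant, and that compact invariant sets consist of complete solutions.

If `A` is an attractor in `𝒜` and `ω(x) ⊆ A`, then the same holds for `ω(V)` with `V` a
neighbourhood of `x` in `𝒜`: after a fixed time everything starting near `x` is in the neighbourhood
`U` with `ω(U ∩ 𝒜) = A`. So the dual repeller is closed; it is weakly invariant, since the solutions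
that reach a point of `ω(x) \ A` at late times can be passed to the limit; and it contains the
`α`-limit set of every complete solution in `𝒜` not contained in `A`. Reading off the first index
`k` for which `A k` contains a given trajectory, respectively its `ω`-limit set, locates its `α`-
and `ω`-limit sets in the Morse sets.
-/

theorem integral_deriv_eq_sub_of_lipschitzWith {E : Type*} [NormedAddCommGroup E]
    [NormedSpace ℝ E] [FiniteDimensional ℝ E] {C : NNReal} {f : ℝ → E} (hf : LipschitzWith C f)
    (a b : ℝ) :
    IntervalIntegrable (deriv f) volume a b ∧ ∫ u in a..b, deriv f u = f b - f a := by
  have hint : IntervalIntegrable (deriv f) volume a b :=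
    (intervalIntegrable_const (c := (C : ℝ))).mono_fun
      (stronglyMeasurable_deriv f).aestronglyMeasurable
      (Eventually.of_forall fun u => by simpa using norm_deriv_le_of_lipschitz hf)
  refine ⟨hint, SeparatingDual.eq_iff_forall_dual_eq (R := ℝ).2 fun φ => ?_⟩
  have hderiv : ∫ u in a..b, φ (deriv f u) = ∫ u in a..b, deriv (φ ∘ f) u := by
    refine intervalIntegral.integral_congr_ae ?_
    filter_upwards [hf.ae_differentiableAt_real] with u hu _
    exact (φ.hasFDerivAt.comp_hasDerivAt u hu.hasDerivAt).deriv.symm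
  have hac := ((φ.lipschitz.comp hf).lipschitzOnWith (s := uIcc a b)).absolutelyContinuousOnInterval
  rw [← φ.intervalIntegral_comp_comm hint, hderiv, hac.integral_deriv_eq_sub, Function.comp_apply,
    Function.comp_apply, map_sub]

section

variable {F : X m → Set (X m)} {γ η : ℝ → X m} {I J : Set ℝ} {s t a b c : ℝ}

theorem IsSolOn.mono (h : IsSolOn F γ I) (hJ : J ⊆ I) : IsSolOn F γ J :=
  let ⟨g, hint, hmem⟩ := h
  ⟨g, fun s hs t ht => hint s (hJ hs) t (hJ ht), ae_mono (Measure.restrict_mono hJ le_rfl) hmem⟩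

theorem IsSolOn.congr (h : IsSolOn F γ I) (hI : MeasurableSet I) (he : EqOn γ η I) :
    IsSolOn F η I := by
  obtain ⟨g, hint, hmem⟩ := h
  refine ⟨g, fun s hs t ht => by rw [← he hs, ← he ht]; exact hint s hs t ht, ?_⟩
  filter_upwards [hmem, ae_restrict_mem hI] with u hu huI
  rwa [← he huI]

theorem IsSolOn.of_basepoint {g : ℝ → X m} (b : ℝ)
    (hint : ∀ t ∈ I, IntervalIntegrable g volume b t ∧ γ t = γ b + ∫ u in b..t, g u)
    (hmem : ∀ᵐ u ∂volume.restrict I, g u ∈ F (γ u)) : IsSolOn F γ I := by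
  refine ⟨g, fun s hs t ht => ⟨(hint s hs).1.symm.trans (hint t ht).1, ?_⟩, hmem⟩
  rw [(hint s hs).2, (hint t ht).2, add_assoc,
    intervalIntegral.integral_add_adjacent_intervals (hint s hs).1
      ((hint s hs).1.symm.trans (hint t ht).1)]

theorem IsSolOn.union (hI : IsSolOn F γ I) (hJ : IsSolOn F γ J) (hIb : IsGreatest I b)
    (hJb : IsLeast J b) : IsSolOn F γ (I ∪ J) := by
  obtain ⟨g, hg, hgF⟩ := hI
  obtain ⟨k, hk, hkF⟩ := hJ
  have hleft : EqOn ((Iic b).piecewise g k) g (Iic b) := piecewise_eqOn _ _ _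
  have hright : EqOn ((Iic b).piecewise g k) k (Ioi b) := by
    simpa only [compl_Iic] using piecewise_eqOn_compl (Iic b) g k
  refine .of_basepoint (g := (Iic b).piecewise g k) b ?_ (ae_restrict_union_iff _ _ _ |>.2 ⟨?_, ?_⟩)
  · rintro t (ht | ht)
    · have heq : EqOn g ((Iic b).piecewise g k) (uIoc b t) := fun u hu =>
        (hleft (by rw [uIoc_of_ge (hIb.2 ht)] at hu; exact hu.2)).symm
      rw [← intervalIntegral.integral_congr_ae (ae_of_all _ heq)]
      exact ⟨(hg b hIb.1 t ht).1.congr heq, (hg b hIb.1 t ht).2⟩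
    · have heq : EqOn k ((Iic b).piecewise g k) (uIoc b t) := fun u hu =>
        (hright (by rw [uIoc_of_le (hJb.2 ht)] at hu; exact hu.1)).symm
      rw [← intervalIntegral.integral_congr_ae (ae_of_all _ heq)]
      exact ⟨(hk b hJb.1 t ht).1.congr heq, (hk b hJb.1 t ht).2⟩
  · filter_upwards [hgF, ae_mono (Measure.restrict_mono hIb.2 le_rfl)
      (ae_restrict_mem measurableSet_Iic)] with u hu hub
    rwa [hleft hub]
  · have hJ' : ∀ᵐ u ∂volume.restrict J, u ∈ Ioi b := by
      refine ae_mono (Measure.restrict_mono (show J ⊆ Ici b from hJb.2) le_rfl) ?_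
      rw [← Measure.restrict_congr_set Ioi_ae_eq_Ici]
      exact ae_restrict_mem measurableSet_Ioi
    filter_upwards [hkF, hJ'] with u hu hub
    rwa [hright hub]

theorem IsSolOn.concat (hγ : IsSolOn F γ (Icc a b)) (hη : IsSolOn F η (Icc b c)) (hab : a ≤ b)
    (hbc : b ≤ c) (he : γ b = η b) :
    IsSolOn F (fun t => if t ≤ b then γ t else η t) (Icc a c) := by
  rw [← Icc_union_Icc_eq_Icc hab hbc]
  refine (hγ.congr measurableSet_Icc fun t ht => (if_pos ht.2).symm).union
    (hη.congr measurableSet_Icc fun t ht => ?_) (isGreatest_Icc hab) (isLeast_Icc hbc)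
  split_ifs with h
  · rw [le_antisymm h ht.1, he]
  · rfl

theorem IsSolOn.comp_add_right (h : IsSolOn F γ I) (c : ℝ) :
    IsSolOn F (fun t => γ (t + c)) ((· + c) ⁻¹' I) := by
  obtain ⟨g, hint, hmem⟩ := h
  refine ⟨fun t => g (t + c), fun s hs t ht => ⟨?_, ?_⟩, ?_⟩
  · simpa only [add_sub_cancel_right] using (hint _ hs _ ht).1.comp_add_right c
  · rw [intervalIntegral.integral_comp_add_right g c]
    exact (hint _ hs _ ht).2
  · have hmp := (measurePreserving_add_right volume c).restrict_preimage_emb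
      (measurableEmbedding_addRight c) I
    exact hmp.quasiMeasurePreserving.tendsto_ae hmem

theorem IsSolOn.continuousOn (h : IsSolOn F γ (Icc a b)) : ContinuousOn γ (Icc a b) := by
  obtain ⟨g, hint, -⟩ := h
  rcases le_or_gt a b with hab | hab
  · have hprim := intervalIntegral.continuousOn_primitive_interval'
      (hint a (left_mem_Icc.2 hab) b (right_mem_Icc.2 hab)).1 left_mem_uIcc
    rw [uIcc_of_le hab] at hprim
    exact (hprim.const_add (γ a)).congr fun t ht => (hint a (left_mem_Icc.2 hab) t ht).2
  · simp only [Icc_eq_empty_of_lt hab, continuousOn_empty]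

theorem IsSolOn.slope_mem (h : IsSolOn F γ (Icc s t)) (hst : s < t) {D : Set (X m)}
    (hD : Convex ℝ D) (hDc : IsClosed D) (hFD : ∀ u ∈ Icc s t, F (γ u) ⊆ D) :
    slope γ s t ∈ D := by
  obtain ⟨g, hint, hmem⟩ := h
  obtain ⟨hgi, hgeq⟩ := hint s (left_mem_Icc.2 hst.le) t (right_mem_Icc.2 hst.le)
  have hgD : ∀ᵐ u ∂volume.restrict (Ioc s t), g u ∈ D := by
    filter_upwards [ae_restrict_mem measurableSet_Ioc,
      ae_mono (Measure.restrict_mono Ioc_subset_Icc_self le_rfl) hmem] with u hu hgu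
    exact hFD u (Ioc_subset_Icc_self hu) hgu
  have haverage := hD.set_average_mem hDc (by simp [hst]) (by simp) hgD
    ((intervalIntegrable_iff_integrableOn_Ioc_of_le hst.le).1 hgi)
  rwa [← uIoc_of_le hst.le, interval_average_eq, ← sub_eq_iff_eq_add'.2 hgeq] at haverage

theorem IsSolOn.lipschitzOnWith {C : NNReal} (h : IsSolOn F γ I) (hI : I.OrdConnected)
    (hC : ∀ u ∈ I, F (γ u) ⊆ closedBall 0 C) : LipschitzOnWith C γ I := by
  have hlt : ∀ s ∈ I, ∀ t ∈ I, s < t → dist (γ s) (γ t) ≤ C * dist s t := by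
    intro s hs t ht hst
    have hslope := (h.mono (hI.out hs ht)).slope_mem hst (convex_closedBall 0 _) isClosed_closedBall
      fun u hu => hC u (hI.out hs ht hu)
    rw [mem_closedBall_zero_iff, slope_def_module, norm_smul, norm_inv,
      inv_mul_le_iff₀ (norm_pos_iff.2 (sub_ne_zero.2 hst.ne'))] at hslope
    rwa [dist_comm, dist_eq_norm, dist_comm, dist_eq_norm, mul_comm]
  refine LipschitzOnWith.of_dist_le_mul fun s hs t ht => ?_
  rcases lt_trichotomy s t with hst | rfl | hst
  · exact hlt s hs t ht hst
  · simp only [dist_self, mul_zero, le_refl]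
  · rw [dist_comm, dist_comm s]
    exact hlt t ht s hs hst

end

/-- The set-valued maps `G i` converge upper semicontinuously to `F` along `l`: near every point
they eventually take values in any prescribed neighbourhood of the value of `F`. For the constant
family `G i = F` this is upper semicontinuity of `F`. -/
def UpperConverges {ι : Type*} (l : Filter ι) (G : ι → X m → Set (X m)) (F : X m → Set (X m)) :
    Prop :=
  ∀ x, ∀ η > 0, ∀ᶠ p : ι × X m in l ×ˢ 𝓝 x, G p.1 p.2 ⊆ cthickening η (F x)

section

variable {F : X m → Set (X m)} {ι : Type*} {l : Filter ι} {G : ι → X m → Set (X m)}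
  {γ : ι → ℝ → X m} {Γ : ℝ → X m} {I : Set ℝ} {K : Set (X m)} {C : NNReal} {x : X m} {s t η : ℝ}

theorem Standing.upperConverges_const (hF : Standing F) : UpperConverges l (fun _ => F) F := by
  intro x η hη
  obtain ⟨δ, hδ, h⟩ := hF.2 x η hη
  have hnear : ∀ᶠ y in 𝓝 x, F y ⊆ cthickening η (F x) :=
    mem_of_superset (ball_mem_nhds x hδ) fun y hy =>
      (h y hy).trans (thickening_subset_cthickening _ _)
  exact tendsto_snd.eventually hnear

theorem UpperConverges.exists_eventually_subset_closedBall (hG : UpperConverges l G F)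
    (hF : Standing F) (hK : IsCompact K) :
    ∃ C : NNReal, ∀ᶠ i in l, ∀ y ∈ K, G i y ⊆ closedBall 0 C := by
  refine hK.induction_on (p := fun s => ∃ C : NNReal, ∀ᶠ i in l, ∀ y ∈ s, G i y ⊆ closedBall 0 C)
    ⟨0, by simp⟩ (fun s t hst ⟨C, hC⟩ => ⟨C, hC.mono fun i hi y hy => hi y (hst hy)⟩) ?_ ?_
  · rintro s t ⟨C, hC⟩ ⟨D, hD⟩
    refine ⟨max C D, (hC.and hD).mono fun i hi y hy => ?_⟩
    rcases hy with hy | hy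
    · exact (hi.1 y hy).trans (closedBall_subset_closedBall (le_max_left _ _))
    · exact (hi.2 y hy).trans (closedBall_subset_closedBall (le_max_right _ _))
  · intro x _
    obtain ⟨C, hC⟩ := ((hF.1 x).2.2.cthickening (r := 1)).isBounded.subset_closedBall 0
    obtain ⟨p, hp, q, hq, h⟩ := eventually_prod_iff.1 (hG x 1 one_pos)
    exact ⟨{y | q y}, mem_nhdsWithin_of_mem_nhds hq, C.toNNReal, hp.mono fun i hi y hy =>
      ((h hi hy).trans hC).trans (closedBall_subset_closedBall (Real.le_coe_toNNReal C))⟩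

theorem UpperConverges.eventually_slope_mem (hG : UpperConverges l G F) (hF : Standing F)
    (hx : Tendsto (fun i => γ i t) l (𝓝 x)) (hη : 0 < η) (C : NNReal) :
    ∃ δ > 0, ∀ᶠ i in l, ∀ s ∈ Ioo t (t + δ), IsSolOn (G i) (γ i) (Icc t s) →
      LipschitzOnWith C (γ i) (Icc t s) → slope (γ i) t s ∈ cthickening η (F x) := by
  obtain ⟨p, hp, q, hq, hpq⟩ := eventually_prod_iff.1 (hG x η hη)
  obtain ⟨r, hr, hrq⟩ := Metric.eventually_nhds_iff.1 hq
  refine ⟨r / 2 / (C + 1), by positivity, ?_⟩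
  filter_upwards [hp, hx.eventually (ball_mem_nhds x (half_pos hr))] with i hi hit s hs hsol hlip
  refine hsol.slope_mem hs.1 ((hF.1 x).2.1.cthickening η) isClosed_cthickening fun u hu =>
    hpq hi (hrq ?_)
  have hut : dist (γ i u) (γ i t) < r / 2 :=
    calc dist (γ i u) (γ i t) ≤ C * dist u t := hlip.dist_le_mul u hu t (left_mem_Icc.2 hs.1.le)
      _ ≤ (C + 1) * dist u t := by gcongr; linarith
      _ < (C + 1) * (r / 2 / (C + 1)) := by
        gcongr
        rw [Real.dist_eq, abs_of_nonneg (sub_nonneg.2 hu.1)]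
        linarith [hu.2, hs.2]
      _ = r / 2 := by field_simp
  linarith [dist_triangle (γ i u) (γ i t) x, mem_ball.1 hit]

theorem isSolOn_of_slope_mem_cthickening (hF : Standing F) (hI : I.OrdConnected)
    (hΓ : LipschitzOnWith C Γ I)
    (hslope : ∀ t ∈ I, ∀ η > 0, ∃ δ > 0, ∀ s ∈ I ∩ Ioo t (t + δ),
      slope Γ t s ∈ cthickening η (F (Γ t))) : IsSolOn F Γ I := by
  obtain ⟨Γ', hΓ', hΓeq⟩ := hΓ.extend_finite_dimension
  refine ⟨deriv Γ', fun s hs t ht => ?_, ?_⟩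
  · obtain ⟨hint, heq⟩ := integral_deriv_eq_sub_of_lipschitzWith hΓ' s t
    exact ⟨hint, by rw [heq, hΓeq hs, hΓeq ht, add_sub_cancel]⟩
  rw [← Measure.restrict_congr_set
    (interior_ae_eq_of_null_frontier (hI.convex.addHaar_frontier volume))]
  filter_upwards [ae_restrict_of_ae hΓ'.ae_differentiableAt_real,
    ae_restrict_mem isOpen_interior.measurableSet] with t hd ht
  have htI := interior_subset ht
  have hlim : Tendsto (slope Γ' t) (𝓝[>] t) (𝓝 (deriv Γ' t)) :=
    hd.hasDerivAt.tendsto_slope.mono_left (nhdsWithin_mono _ fun s hs => (ne_of_gt hs))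
  rw [← (hF.1 (Γ t)).2.2.isClosed.closure_eq, closure_eq_iInter_cthickening]
  refine mem_iInter₂.2 fun η hη => isClosed_cthickening.mem_of_tendsto hlim ?_
  obtain ⟨δ, hδ, h⟩ := hslope t htI η hη
  filter_upwards [Ioo_mem_nhdsGT (lt_add_of_pos_right t hδ),
    mem_nhdsWithin_of_mem_nhds (mem_interior_iff_mem_nhds.1 ht)] with s hs hsI
  have heq : slope Γ' t s = slope Γ t s := by simp only [slope, hΓeq htI, hΓeq hsI]
  exact heq ▸ h s ⟨hsI, hs⟩

theorem UpperConverges.isSolOn_of_tendsto [l.NeBot] (hG : UpperConverges l G F)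
    (hF : Standing F) (hI : I.OrdConnected) (hK : IsCompact K)
    (hsol : ∀ s ∈ I, ∀ t ∈ I, ∀ᶠ i in l, IsSolOn (G i) (γ i) (Icc s t) ∧
      MapsTo (γ i) (Icc s t) K)
    (hlim : ∀ t ∈ I, Tendsto (fun i => γ i t) l (𝓝 (Γ t))) : IsSolOn F Γ I := by
  obtain ⟨C, hC⟩ := hG.exists_eventually_subset_closedBall hF hK
  have hlip : ∀ s ∈ I, ∀ t ∈ I, ∀ᶠ i in l, LipschitzOnWith C (γ i) (Icc s t) := fun s hs t ht => by
    filter_upwards [hC, hsol s hs t ht] with i hiC hi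
    exact hi.1.lipschitzOnWith ordConnected_Icc fun u hu => hiC _ (hi.2 hu)
  have hΓ : LipschitzOnWith C Γ I := LipschitzOnWith.of_dist_le_mul fun s hs t ht => by
    wlog hst : s ≤ t generalizing s t
    · rw [dist_comm, dist_comm s]
      exact this t ht s hs (le_of_not_ge hst)
    exact le_of_tendsto ((hlim s hs).dist (hlim t ht)) <| (hlip s hs t ht).mono fun i hi =>
      hi.dist_le_mul s (left_mem_Icc.2 hst) t (right_mem_Icc.2 hst)
  refine isSolOn_of_slope_mem_cthickening hF hI hΓ fun t ht η hη => ?_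
  obtain ⟨δ, hδ, hslope⟩ := hG.eventually_slope_mem hF (hlim t ht) hη C
  refine ⟨δ, hδ, fun s hs => isClosed_cthickening.mem_of_tendsto (f := fun i => slope (γ i) t s)
    (((hlim s hs.1).sub (hlim t ht)).const_smul _) ?_⟩
  filter_upwards [hslope, hsol t ht s hs.1, hlip t ht s hs.1] with i hi hi' hiL
  exact hi s hs.2 hi'.1 hiL

theorem UpperConverges.mono_left {l' : Filter ι} (hG : UpperConverges l G F) (hl : l' ≤ l) :
    UpperConverges l' G F :=
  fun x η hη => (hG x η hη).filter_mono (prod_mono_left _ hl)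

end

theorem UpperConverges.exists_isSolOn_tendsto {F : X m → Set (X m)} {ι : Type*}
    {𝒰 : Ultrafilter ι} {G : ι → X m → Set (X m)} {γ : ι → ℝ → X m} {I : Set ℝ} {K : Set (X m)}
    (hG : UpperConverges 𝒰 G F) (hF : Standing F) (hI : I.OrdConnected) (hK : IsCompact K)
    (hsol : ∀ s ∈ I, ∀ t ∈ I, ∀ᶠ i in 𝒰, IsSolOn (G i) (γ i) (Icc s t) ∧
      MapsTo (γ i) (Icc s t) K) :
    ∃ Γ : ℝ → X m, IsSolOn F Γ I ∧ MapsTo Γ I K ∧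
      ∀ t ∈ I, Tendsto (fun i => γ i t) 𝒰 (𝓝 (Γ t)) := by
  have hex : ∀ t, ∃ y, t ∈ I → y ∈ K ∧ Tendsto (fun i => γ i t) 𝒰 (𝓝 y) := fun t => by
    by_cases ht : t ∈ I
    · have hmem : ∀ᶠ i in 𝒰, γ i t ∈ K :=
        (hsol t ht t ht).mono fun i hi => hi.2 (left_mem_Icc.2 le_rfl)
      obtain ⟨y, hyK, hy⟩ := hK.ultrafilter_le_nhds (𝒰.map fun i => γ i t) (le_principal_iff.2 hmem)
      exact ⟨y, fun _ => ⟨hyK, hy⟩⟩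
    · exact ⟨0, fun h => absurd h ht⟩
  choose Γ hΓ using hex
  exact ⟨Γ, hG.isSolOn_of_tendsto hF hI hK hsol fun t ht => (hΓ t ht).2,
    fun t ht => (hΓ t ht).1, fun t ht => (hΓ t ht).2⟩

section

variable {F : X m → Set (X m)} {γ : ℝ → X m} {B B' : Set (X m)} {s t : ℝ} {y : X m}

theorem mem_reachSet :
    y ∈ reachSet F t B ↔ ∃ γ : ℝ → X m, IsSolOn F γ (Icc 0 t) ∧ γ 0 ∈ B ∧ γ t = y := by
  simp only [reachSet, reach, mem_iUnion₂, mem_ofPred_eq]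
  exact ⟨fun ⟨_, hx, γ, hγ, h0, hy⟩ => ⟨γ, hγ, h0 ▸ hx, hy⟩,
    fun ⟨γ, hγ, h0, hy⟩ => ⟨γ 0, h0, γ, hγ, rfl, hy⟩⟩

theorem reachSet_mono (h : B ⊆ B') : reachSet F t B ⊆ reachSet F t B' :=
  biUnion_subset_biUnion_left h

theorem IsSolOn.mem_reachSet (h : IsSolOn F γ (Icc s t)) (hs : γ s ∈ B) :
    γ t ∈ reachSet F (t - s) B := by
  refine DI.mem_reachSet.2 ⟨fun u => γ (u + s), ?_, by rwa [← zero_add s] at hs,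
    congrArg γ (sub_add_cancel t s)⟩
  simpa only [preimage_add_const_Icc, sub_self] using h.comp_add_right s

theorem exists_tail_of_mem_reachSet (hs : 0 ≤ s) (hy : y ∈ reachSet F (s + t) B) :
    ∃ γ : ℝ → X m, IsSolOn F γ (Icc 0 t) ∧ γ t = y ∧
      ∀ u ∈ Icc 0 t, γ u ∈ reachSet F (s + u) B := by
  obtain ⟨γ, hγ, h0, rfl⟩ := mem_reachSet.1 hy
  refine ⟨fun u => γ (u + s), (hγ.comp_add_right s).mono fun u hu => ?_, by rw [add_comm s],
    fun u hu => mem_reachSet.2 ⟨γ, hγ.mono (Icc_subset_Icc_right ?_), h0, by rw [add_comm s]⟩⟩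
  · exact ⟨by linarith [hu.1], by linarith [hu.2]⟩
  · linarith [hu.2]

theorem reachSet_add (hs : 0 ≤ s) (ht : 0 ≤ t) :
    reachSet F (s + t) B = reachSet F t (reachSet F s B) := by
  apply Subset.antisymm
  · intro y hy
    obtain ⟨γ, hγ, rfl, hmem⟩ := exists_tail_of_mem_reachSet hs hy
    exact mem_reachSet.2 ⟨γ, hγ, by simpa using hmem 0 (left_mem_Icc.2 ht), rfl⟩
  · intro y hy
    obtain ⟨η, hη, hη0, rfl⟩ := mem_reachSet.1 hy
    obtain ⟨γ, hγ, h0, hs'⟩ := mem_reachSet.1 hη0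
    have hshift : IsSolOn F (fun u => η (u + -s)) (Icc s (s + t)) := by
      simpa [preimage_add_const_Icc, add_comm t] using hη.comp_add_right (-s)
    refine mem_reachSet.2 ⟨_, hγ.concat hshift hs (by linarith) (by simpa using hs'), ?_, ?_⟩
    · simpa only [if_pos hs]
    · rcases ht.eq_or_lt with rfl | ht
      · simpa using hs'
      · simp [ht]

end

section

variable {F : X m → Set (X m)}

/- Cellina's approximate selections: a partition of unity glues values `c ∈ F x`, which lie in the
convex hull of `F` over the `1 / (n + 1)`-ball around every point close to `x`. -/
theorem Standing.exists_contDiff_upperConverges (hF : Standing F) :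
    ∃ f : ℕ → X m → X m, (∀ n, ContDiff ℝ 1 (f n)) ∧
      UpperConverges atTop (fun n x => {f n x}) F := by
  have hsel (n : ℕ) : ∃ f : X m → X m, ContDiff ℝ 1 f ∧
      ∀ x, f x ∈ convexHull ℝ (⋃ y ∈ ball x (1 / (n + 1) : ℝ), F y) := by
    obtain ⟨f, hf⟩ := exists_contMDiffMap_forall_mem_convex_of_local_const
      (modelWithCornersSelf ℝ (X m)) (n := 1)
      (t := fun x => convexHull ℝ (⋃ y ∈ ball x (1 / (n + 1) : ℝ), F y))
      (fun x => convex_convexHull ℝ _) fun x => by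
        obtain ⟨c, hc⟩ := (hF.1 x).1
        have hn : (0 : ℝ) < 1 / (n + 1) := Nat.one_div_pos_of_nat
        refine ⟨c, mem_of_superset (ball_mem_nhds x hn) fun y hy => ?_⟩
        exact subset_convexHull ℝ _ (mem_biUnion (mem_ball_comm.1 hy) hc)
    exact ⟨f, f.contMDiff.contDiff, hf⟩
  choose f hf hmem using hsel
  refine ⟨f, hf, fun x η hη => ?_⟩
  obtain ⟨δ, hδ, h⟩ := hF.2 x η hη
  have hn : ∀ᶠ n : ℕ in atTop, (1 / (n + 1) : ℝ) < δ / 2 :=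
    tendsto_one_div_add_atTop_nhds_zero_nat.eventually_lt_const (half_pos hδ)
  refine (hn.prod_mk (ball_mem_nhds x (half_pos hδ))).mono fun p hp => ?_
  refine singleton_subset_iff.2
    (convexHull_min (iUnion₂_subset fun y hy => ?_) ((hF.1 x).2.1.cthickening η) (hmem p.1 p.2))
  exact (h y (by linarith [dist_triangle y p.2 x, mem_ball.1 hy, hp.1, mem_ball.1 hp.2])).trans
    (thickening_subset_cthickening _ _)

theorem exists_isSolOn_of_contDiff {f : X m → X m} (hf : ContDiff ℝ 1 f) {x : X m} {r C : NNReal}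
    (hC : ∀ y ∈ closedBall x r, ‖f y‖ ≤ C) {τ : ℝ} (hτ : 0 ≤ τ) (hCτ : C * τ ≤ r) :
    ∃ γ : ℝ → X m, IsSolOn (fun y => {f y}) γ (Icc 0 τ) ∧ γ 0 = x ∧
      MapsTo γ (Icc 0 τ) (closedBall x r) := by
  obtain ⟨K, hK⟩ := hf.contDiffOn.exists_lipschitzOnWith one_ne_zero (convex_closedBall x r)
    (isCompact_closedBall x r)
  have hpl : IsPicardLindelof (fun _ => f) (⟨0, left_mem_Icc.2 hτ⟩ : Icc 0 τ) x r 0 C K :=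
    .of_time_independent hC hK (by simpa [hτ] using hCτ)
  obtain ⟨α, hα⟩ := ODE.FunSpace.exists_isFixedPt_next hpl (mem_closedBall_self le_rfl)
  have hpicard : ∀ t ∈ Icc 0 τ, α.compProj t = x + ∫ u in (0)..t, f (α.compProj u) := by
    intro t ht
    rw [ODE.FunSpace.compProj_apply, projIcc_of_mem _ ht]
    nth_rw 1 [← hα]
    rfl
  have h0 : α.compProj 0 = x := by simpa using hpicard 0 (left_mem_Icc.2 hτ)
  refine ⟨α.compProj, .of_basepoint (g := fun u => f (α.compProj u)) 0 (fun t ht => ⟨?_, ?_⟩)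
    (ae_of_all _ fun u => rfl), h0, fun t _ => α.compProj_mem_closedBall hpl.mul_max_le⟩
  · exact (hf.continuous.comp α.continuous_compProj).intervalIntegrable _ _
  · rw [h0, hpicard t ht]

theorem Standing.exists_isSolOn (hF : Standing F) {K : Set (X m)} (hK : IsCompact K) :
    ∃ τ > 0, ∀ x ∈ K, ∃ γ : ℝ → X m, IsSolOn F γ (Icc 0 τ) ∧ γ 0 = x := by
  obtain ⟨f, hf, hconv⟩ := hF.exists_contDiff_upperConverges
  obtain ⟨C, hC⟩ := hconv.exists_eventually_subset_closedBall hF (hK.cthickening (r := 1))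
  have hτ : (0 : ℝ) < 1 / (C + 1) := by positivity
  have hCτ : (C : ℝ) * (1 / (C + 1)) ≤ (1 : NNReal) := by
    rw [mul_one_div, NNReal.coe_one, div_le_one (by positivity)]
    exact le_add_of_nonneg_right zero_le_one
  refine ⟨1 / (C + 1), hτ, fun x hx => ?_⟩
  have hex : ∀ᶠ n in atTop, ∃ γ : ℝ → X m, IsSolOn (fun y => {f n y}) γ (Icc 0 (1 / (C + 1))) ∧
      γ 0 = x ∧ MapsTo γ (Icc 0 (1 / (C + 1))) (closedBall x (1 : NNReal)) := hC.mono fun n hn =>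
    exists_isSolOn_of_contDiff (hf n) (fun y hy => mem_closedBall_zero_iff.1 <|
      hn y (closedBall_subset_cthickening hx 1 hy) rfl) hτ.le hCτ
  obtain ⟨γ, hγ⟩ := hex.choice
  replace hγ := hγ.filter_mono Nat.hyperfilter_le_atTop
  obtain ⟨Γ, hΓ, -, hlim⟩ := (hconv.mono_left Nat.hyperfilter_le_atTop).exists_isSolOn_tendsto hF
    ordConnected_Icc (isCompact_closedBall x (1 : NNReal)) fun s hs t ht => hγ.mono fun n hn =>
      ⟨hn.1.mono (Icc_subset_Icc hs.1 ht.2), hn.2.2.mono_left (Icc_subset_Icc hs.1 ht.2)⟩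
  exact ⟨Γ, hΓ, tendsto_nhds_unique (hlim 0 (left_mem_Icc.2 hτ.le))
    (tendsto_const_nhds.congr' (hγ.mono fun n hn => hn.2.1.symm))⟩

theorem Standing.reachSet_nonempty (hF : Standing F) {A B : Set (X m)} (hA : IsCompact A)
    (hpos : PosInvariant F A) (hBA : B ⊆ A) (hB : B.Nonempty) {t : ℝ} (ht : 0 ≤ t) :
    (reachSet F t B).Nonempty := by
  obtain ⟨τ, hτ, hex⟩ := hF.exists_isSolOn hA
  have hshort : ∀ B ⊆ A, B.Nonempty → ∀ t ≤ τ, (reachSet F t B).Nonempty := by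
    rintro B hBA ⟨x, hx⟩ t ht
    obtain ⟨γ, hγ, rfl⟩ := hex x (hBA hx)
    exact ⟨γ t, mem_reachSet.2 ⟨γ, hγ.mono (Icc_subset_Icc_right ht), hx, rfl⟩⟩
  obtain ⟨n, hn⟩ := Archimedean.arch t hτ
  induction n generalizing t B with
  | zero => exact hshort B hBA hB t (by rw [zero_nsmul] at hn; exact hn.trans hτ.le)
  | succ n ih =>
    rcases le_total t τ with htτ | htτ
    · exact hshort B hBA hB t htτ
    rw [← add_sub_cancel τ t, reachSet_add hτ.le (sub_nonneg.2 htτ)]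
    exact ih ((reachSet_mono hBA).trans (hpos τ hτ.le)) (hshort B hBA hB τ le_rfl)
      (sub_nonneg.2 htτ) (by rw [succ_nsmul] at hn; linarith)

end

section

variable {F : X m → Set (X m)} {A B B' K : Set (X m)} {s : ℝ} {y : X m}

theorem omegaLim_eq_iInter_closure (F : X m → Set (X m)) (B : Set (X m)) :
    omegaLim F B = ⋂ T : ℝ, closure (⋃ t ∈ Ici T, reachSet F t B) := by
  ext y
  refine ⟨fun ⟨t, p, ht, hp, hy⟩ => mem_iInter.2 fun T => ?_, fun hy => ?_⟩
  · exact mem_closure_of_tendsto hy <| (ht.eventually_ge_atTop T).mono fun n hn =>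
      mem_biUnion hn (hp n)
  · have hnear (n : ℕ) : ∃ t : ℝ, n ≤ t ∧ ∃ p ∈ reachSet F t B, dist p y < 1 / (n + 1) := by
      obtain ⟨p, hp, hpy⟩ := Metric.mem_closure_iff.1 (mem_iInter.1 hy n) _
        (Nat.one_div_pos_of_nat (n := n))
      obtain ⟨t, ht, hpt⟩ := mem_iUnion₂.1 hp
      exact ⟨t, ht, p, hpt, by rwa [dist_comm]⟩
    choose t ht p hp hpy using hnear
    exact ⟨t, p, tendsto_atTop_mono ht tendsto_natCast_atTop_atTop, hp,
      tendsto_iff_dist_tendsto_zero.2 (squeeze_zero (fun _ => dist_nonneg) (fun n => (hpy n).le)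
        tendsto_one_div_add_atTop_nhds_zero_nat)⟩

theorem mem_omegaLim_of_tendsto {ι : Type*} {l : Filter ι} [l.NeBot] {t : ι → ℝ} {p : ι → X m}
    (ht : Tendsto t l atTop) (hp : ∀ᶠ i in l, p i ∈ reachSet F (t i) B)
    (hy : Tendsto p l (𝓝 y)) : y ∈ omegaLim F B := by
  rw [omegaLim_eq_iInter_closure]
  refine mem_iInter.2 fun T => mem_closure_of_tendsto hy ?_
  filter_upwards [hp, ht.eventually_ge_atTop T] with i hi hiT using mem_biUnion hiT hi

theorem omegaLim_mono (h : B ⊆ B') : omegaLim F B ⊆ omegaLim F B' :=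
  fun _ ⟨t, p, ht, hp, hy⟩ => ⟨t, p, ht, fun n => reachSet_mono h (hp n), hy⟩

theorem omegaLim_reachSet (hs : 0 ≤ s) : omegaLim F (reachSet F s B) = omegaLim F B := by
  apply Subset.antisymm
  · rintro y ⟨t, p, ht, hp, hy⟩
    refine mem_omegaLim_of_tendsto (tendsto_atTop_add_const_left _ s ht) ?_ hy
    filter_upwards [ht.eventually_ge_atTop 0] with n hn
    exact (reachSet_add hs hn).symm ▸ hp n
  · rintro y ⟨t, p, ht, hp, hy⟩
    refine mem_omegaLim_of_tendsto (tendsto_atTop_add_const_right _ (-s) ht) ?_ hy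
    filter_upwards [ht.eventually_ge_atTop s] with n hn
    rw [← reachSet_add hs (by linarith)]
    simpa using hp n

theorem PosInvariant.omegaLim_subset (hA : PosInvariant F A) (hAc : IsClosed A) (hBA : B ⊆ A) :
    omegaLim F B ⊆ A := fun _ ⟨_, _, ht, hp, hy⟩ =>
  hAc.mem_of_tendsto hy <| (ht.eventually_ge_atTop 0).mono fun n hn =>
    hA _ hn (reachSet_mono hBA (hp n))

theorem Invariant.posInvariant (hA : Invariant F A) : PosInvariant F A :=
  fun t ht => (hA t ht).subset

theorem Invariant.subset_omegaLim (hA : Invariant F A) (hAB : A ⊆ B) : A ⊆ omegaLim F B :=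
  fun y hy => mem_omegaLim_of_tendsto (l := atTop) (p := fun _ => y) tendsto_id
    ((eventually_ge_atTop 0).mono fun t ht => reachSet_mono hAB ((hA t ht).symm ▸ hy))
    tendsto_const_nhds

theorem eventually_disjoint_reachSet (hK : IsCompact K) (hd : Disjoint (omegaLim F B) K) :
    ∀ᶠ t in atTop, Disjoint (reachSet F t B) K := by
  obtain ⟨T, hT⟩ := hK.elim_directed_family_closed
    (fun T : ℝ => closure (⋃ t ∈ Ici T, reachSet F t B)) (fun T => isClosed_closure)
    (by rw [← omegaLim_eq_iInter_closure]; exact hd.symm.inter_eq)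
    (directed_of_isDirected_le fun S T hST =>
      closure_mono (biUnion_subset_biUnion_left (Ici_subset_Ici.2 hST)))
  filter_upwards [eventually_ge_atTop T] with t ht
  exact ((disjoint_iff_inter_eq_empty.2 hT).mono_right
    ((subset_biUnion_of_mem (u := fun t => reachSet F t B) ht).trans subset_closure)).symm

end

theorem subset_of_disjoint_frontier_of_isPreconnected {α : Type*} [TopologicalSpace α]
    {S W : Set α} (hS : IsPreconnected S) (hd : Disjoint S (frontier W))
    (hSW : (S ∩ W).Nonempty) : S ⊆ W := by
  have hcover : S ⊆ interior W ∪ (closure W)ᶜ := fun x hx =>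
    or_iff_not_imp_right.2 fun hxc => by_contra fun hxi =>
      disjoint_left.1 hd hx ⟨not_not.1 hxc, hxi⟩
  obtain ⟨x, hxS, hxW⟩ := hSW
  exact (hS.subset_left_of_subset_union isOpen_interior isClosed_closure.isOpen_compl
    (disjoint_compl_right.mono_left (interior_subset.trans subset_closure)) hcover
    ⟨x, hxS, (hcover hxS).resolve_right (not_not.2 (subset_closure hxW))⟩).trans interior_subset

section

variable {F : X m → Set (X m)} {A B : Set (X m)} {T : ℝ}

/- Long solutions ending near `ω(B)` have spent their last `T` time units near `ω(B)`: at late times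
they cannot meet the boundary of a neighbourhood of `ω(B)`, and their arcs are connected. -/
theorem Standing.omegaLim_subset_reachSet (hF : Standing F) (hc : IsCompact (omegaLim F B))
    (hT : 0 ≤ T) : omegaLim F B ⊆ reachSet F T (omegaLim F B) := by
  rintro y ⟨t, p, ht, hp, hy⟩
  set W := thickening 1 (omegaLim F B)
  have hWK : W ⊆ cthickening 1 (omegaLim F B) := thickening_subset_cthickening _ _
  have hyW : y ∈ W := self_subset_thickening one_pos _ ⟨t, p, ht, hp, hy⟩
  have hfrontier : ∀ᶠ t in atTop, ∀ u ≥ t, Disjoint (reachSet F u B) (frontier W) := by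
    refine eventually_forall_ge_atTop.2 (eventually_disjoint_reachSet
      (hc.cthickening.of_isClosed_subset isClosed_frontier
        (frontier_subset_closure.trans (closure_minimal hWK isClosed_cthickening))) ?_)
    exact ((disjoint_frontier_iff_isOpen.2 isOpen_thickening).mono_right
      (self_subset_thickening one_pos _)).symm
  have hshift : Tendsto (fun n => t n - T) atTop atTop := tendsto_atTop_add_const_right _ (-T) ht
  have htail : ∀ᶠ n in atTop, ∃ γ : ℝ → X m, IsSolOn F γ (Icc 0 T) ∧ γ T = p n ∧
      γ 0 ∈ reachSet F (t n - T) B ∧ MapsTo γ (Icc 0 T) (cthickening 1 (omegaLim F B)) := by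
    filter_upwards [hshift.eventually_ge_atTop 0, hshift.eventually hfrontier,
      hy.eventually (isOpen_thickening.mem_nhds hyW)] with n hn hnd hpW
    obtain ⟨γ, hγ, hγT, hmem⟩ := exists_tail_of_mem_reachSet (s := t n - T) (t := T) hn
      (by simpa using hp n)
    have hW : γ '' Icc 0 T ⊆ W := subset_of_disjoint_frontier_of_isPreconnected
      (isPreconnected_Icc.image γ hγ.continuousOn)
      (disjoint_left.2 <| forall_mem_image.2 fun u hu =>
        disjoint_left.1 (hnd _ (le_add_of_nonneg_right hu.1)) (hmem u hu))
      ⟨γ T, mem_image_of_mem γ (right_mem_Icc.2 hT), hγT ▸ hpW⟩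
    exact ⟨γ, hγ, hγT, by simpa using hmem 0 (left_mem_Icc.2 hT), fun u hu =>
      hWK (hW (mem_image_of_mem γ hu))⟩
  obtain ⟨γ, hγ⟩ := htail.choice
  replace hγ := hγ.filter_mono Nat.hyperfilter_le_atTop
  obtain ⟨Γ, hΓ, -, hlim⟩ := hF.upperConverges_const.exists_isSolOn_tendsto hF ordConnected_Icc
    (hc.cthickening (r := 1)) fun s hs t ht => hγ.mono fun n hn =>
      ⟨hn.1.mono (Icc_subset_Icc hs.1 ht.2), hn.2.2.2.mono_left (Icc_subset_Icc hs.1 ht.2)⟩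
  refine mem_reachSet.2 ⟨Γ, hΓ, ?_, ?_⟩
  · exact mem_omegaLim_of_tendsto (hshift.mono_left Nat.hyperfilter_le_atTop)
      (hγ.mono fun n hn => hn.2.2.1) (hlim 0 (left_mem_Icc.2 hT))
  · exact tendsto_nhds_unique (hlim T (right_mem_Icc.2 hT))
      ((hy.mono_left Nat.hyperfilter_le_atTop).congr' (hγ.mono fun n hn => hn.2.1.symm))

theorem Standing.invariant_of_omegaLim_eq (hF : Standing F) (hA : IsCompact A) (hAB : A ⊆ B)
    (h : omegaLim F B = A) : Invariant F A := by
  have hneg : ∀ t ≥ 0, A ⊆ reachSet F t A := by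
    subst h
    exact fun t ht => hF.omegaLim_subset_reachSet hA ht
  refine fun t ht => Subset.antisymm (fun y hy => h ▸ ?_) (hneg t ht)
  refine mem_omegaLim_of_tendsto (l := atTop) (p := fun _ => y)
    (tendsto_atTop_add_const_right _ t tendsto_id) ?_ tendsto_const_nhds
  filter_upwards [eventually_ge_atTop 0] with s hs
  exact reachSet_mono hAB (reachSet_add hs ht ▸ reachSet_mono (hneg s hs) hy)

end

section

variable {F : X m → Set (X m)} {𝒜 A : Set (X m)} {T : ℝ} {x : X m}

theorem Invariant.exists_extension_neg (hA : Invariant F A) (hT : 0 ≤ T) {η : ℝ → X m}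
    (hη : IsSolOn F η (Icc 0 T)) (h0 : η 0 ∈ A) :
    ∃ ζ : ℝ → X m, IsSolOn F ζ (Icc (-T) T) ∧ MapsTo ζ (Icc (-T) T) A ∧ EqOn ζ η (Icc 0 T) := by
  obtain ⟨β, hβ, hβ0, hβT⟩ := mem_reachSet.1 ((hA T hT).symm ▸ h0)
  have hshift : IsSolOn F (fun t => β (t + T)) (Icc (-T) 0) := by
    simpa only [preimage_add_const_Icc, zero_sub, sub_self] using hβ.comp_add_right T
  have hζ := hshift.concat hη (neg_nonpos.2 hT) hT (by simpa only [zero_add])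
  refine ⟨_, hζ, fun u hu => ?_, fun u hu => ?_⟩
  · refine hA.posInvariant _ (sub_nonneg.2 hu.1)
      ((hζ.mono (Icc_subset_Icc_right hu.2)).mem_reachSet ?_)
    simpa [hT] using hβ0
  · dsimp only
    split_ifs with h
    · rw [le_antisymm h hu.1, zero_add, hβT]
    · rfl

theorem Standing.exists_complete_tendsto (hF : Standing F) (hA : IsCompact A)
    (hinv : Invariant F A) {ι : Type*} {𝒰 : Ultrafilter ι} {t : ι → ℝ} (ht : Tendsto t 𝒰 atTop)
    {η : ι → ℝ → X m} (hη : ∀ᶠ i in 𝒰, IsSolOn F (η i) (Icc 0 (t i)) ∧ η i 0 ∈ A) :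
    ∃ Γ : ℝ → X m, IsSolOn F Γ univ ∧ range Γ ⊆ A ∧
      ∀ s ≥ 0, Tendsto (fun i => η i s) 𝒰 (𝓝 (Γ s)) := by
  have hext : ∀ᶠ i in 𝒰, ∃ ζ : ℝ → X m, IsSolOn F ζ (Icc (-t i) (t i)) ∧
      MapsTo ζ (Icc (-t i) (t i)) A ∧ EqOn ζ (η i) (Icc 0 (t i)) := by
    filter_upwards [hη, ht.eventually_ge_atTop 0] with i hi hti
    exact hinv.exists_extension_neg hti hi.1 hi.2
  obtain ⟨ζ, hζ⟩ := hext.choice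
  obtain ⟨Γ, hΓ, hΓA, hlim⟩ := hF.upperConverges_const.exists_isSolOn_tendsto hF ordConnected_univ
    hA (𝒰 := 𝒰) (γ := ζ) fun a _ b _ => by
      filter_upwards [hζ, ht.eventually_ge_atTop (-a), ht.eventually_ge_atTop b] with i hi ha hb
      have hsub : Icc a b ⊆ Icc (-t i) (t i) := Icc_subset_Icc (neg_le.1 ha) hb
      exact ⟨hi.1.mono hsub, hi.2.1.mono_left hsub⟩
  refine ⟨Γ, hΓ, range_subset_iff.2 fun s => hΓA (mem_univ s), fun s hs => ?_⟩
  refine (hlim s (mem_univ s)).congr' ?_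
  filter_upwards [hζ, ht.eventually_ge_atTop s] with i hi his using hi.2.2 ⟨hs, his⟩

theorem Standing.weaklyInvariant_of_invariant (hF : Standing F) (hA : IsCompact A)
    (hinv : Invariant F A) : WeaklyInvariant F A := by
  intro x hx
  have hsol (n : ℕ) : ∃ η : ℝ → X m, IsSolOn F η (Icc 0 n) ∧ η 0 = x := by
    obtain ⟨y, hy⟩ := hF.reachSet_nonempty hA hinv.posInvariant (singleton_subset_iff.2 hx)
      (singleton_nonempty x) n.cast_nonneg
    obtain ⟨η, hη, h0, -⟩ := mem_reachSet.1 hy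
    exact ⟨η, hη, h0⟩
  choose η hη h0 using hsol
  obtain ⟨Γ, hΓ, hΓA, hlim⟩ := hF.exists_complete_tendsto hA hinv
    (tendsto_natCast_atTop_atTop.mono_left Nat.hyperfilter_le_atTop)
    (Eventually.of_forall fun n => ⟨hη n, (h0 n).symm ▸ hx⟩)
  exact ⟨Γ, hΓ, tendsto_nhds_unique (hlim 0 le_rfl) (by simp only [h0, tendsto_const_nhds]), hΓA⟩

theorem Standing.eventually_reachSet_subset (hF : Standing F) (h𝒜 : IsCompact 𝒜)
    (hpos : PosInvariant F 𝒜) (hT : 0 ≤ T) {W : Set (X m)} (hW : IsOpen W)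
    (hx : reachSet F T {x} ⊆ W) : ∀ᶠ z in 𝓝[𝒜] x, reachSet F T {z} ⊆ W := by
  by_contra hcon
  obtain ⟨𝒰, h𝒰⟩ := Ultrafilter.exists_le (f := 𝓝[𝒜] x ⊓ 𝓟 {z | ¬ reachSet F T {z} ⊆ W})
    (h := frequently_iff_neBot.1 (not_eventually.1 hcon))
  have hescape : ∀ᶠ z in 𝒰, ∃ γ : ℝ → X m, IsSolOn F γ (Icc 0 T) ∧ γ 0 = z ∧ γ T ∉ W ∧
      MapsTo γ (Icc 0 T) 𝒜 := by
    filter_upwards [h𝒰 (mem_inf_of_left self_mem_nhdsWithin),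
      h𝒰 (mem_inf_of_right (mem_principal_self _))] with z hz hzW
    obtain ⟨y, hy, hyW⟩ := not_subset.1 hzW
    obtain ⟨γ, hγ, rfl, rfl⟩ := mem_reachSet.1 hy
    exact ⟨γ, hγ, rfl, hyW, fun u hu => hpos u hu.1
      (mem_reachSet.2 ⟨γ, hγ.mono (Icc_subset_Icc_right hu.2), hz, rfl⟩)⟩
  obtain ⟨γ, hγ⟩ := hescape.choice
  obtain ⟨Γ, hΓ, -, hlim⟩ := hF.upperConverges_const.exists_isSolOn_tendsto hF ordConnected_Icc h𝒜
    fun s hs t ht => hγ.mono fun z hz =>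
      ⟨hz.1.mono (Icc_subset_Icc hs.1 ht.2), hz.2.2.2.mono_left (Icc_subset_Icc hs.1 ht.2)⟩
  have h𝒰x : Tendsto id 𝒰 (𝓝 x) := h𝒰.trans (inf_le_left.trans nhdsWithin_le_nhds)
  have hΓ0 : Γ 0 = x := tendsto_nhds_unique (hlim 0 (left_mem_Icc.2 hT))
    (h𝒰x.congr' (hγ.mono fun z hz => hz.2.1.symm))
  have hΓT : Γ T ∉ W := hW.isClosed_compl.mem_of_tendsto (hlim T (right_mem_Icc.2 hT))
    (hγ.mono fun z hz => hz.2.2.1)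
  exact hΓT (hx (mem_reachSet.2 ⟨Γ, hΓ, hΓ0, rfl⟩))

end

section

variable {F : X m → Set (X m)} {𝒜 A B : Set (X m)} {x : X m}

theorem IsAttractorIn.invariant (hF : Standing F) (hA : IsAttractorIn F 𝒜 A) : Invariant F A := by
  obtain ⟨hc, hA𝒜, U, hU, hω⟩ := hA
  exact hF.invariant_of_omegaLim_eq hc (subset_inter (hU.trans interior_subset) hA𝒜) hω

theorem IsAttractorIn.of_subset (hF : Standing F) (hA : IsAttractorIn F 𝒜 A) (hAB : A ⊆ B)
    (hB : B ⊆ 𝒜) : IsAttractorIn F B A := by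
  have hinv := hA.invariant hF
  obtain ⟨hc, -, U, hU, hω⟩ := hA
  refine ⟨hc, hAB, U, hU, Subset.antisymm ?_ ?_⟩
  · exact (omegaLim_mono (inter_subset_inter_right U hB)).trans hω.subset
  · exact hinv.subset_omegaLim (subset_inter (hU.trans interior_subset) hAB)

theorem mem_dualRepeller : x ∈ dualRepeller F 𝒜 A ↔ x ∈ 𝒜 ∧ ¬ omegaLim F {x} ⊆ A :=
  and_congr_right fun _ => sdiff_nonempty

theorem inter_dualRepeller (hB : B ⊆ 𝒜) : B ∩ dualRepeller F 𝒜 A = dualRepeller F B A := by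
  ext x
  exact ⟨fun hx => ⟨hx.1, hx.2.2⟩, fun hx => ⟨hx.1, hB hx.1, hx.2⟩⟩

theorem PosInvariant.disjoint_dualRepeller (hA : PosInvariant F A) (hAc : IsClosed A) :
    Disjoint A (dualRepeller F 𝒜 A) :=
  disjoint_left.2 fun _ hxA hx =>
    (mem_dualRepeller.1 hx).2 (hA.omegaLim_subset hAc (singleton_subset_iff.2 hxA))

theorem IsAttractorIn.exists_mem_nhdsWithin_omegaLim_subset (hF : Standing F) (h𝒜 : IsCompact 𝒜)
    (hpos : PosInvariant F 𝒜) (hA : IsAttractorIn F 𝒜 A) (hx : x ∈ 𝒜) (hω : omegaLim F {x} ⊆ A) :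
    ∃ V ∈ 𝓝[𝒜] x, omegaLim F V ⊆ A := by
  obtain ⟨-, -, U, hU, hωU⟩ := hA
  have habsorb : ∀ᶠ t in atTop, Disjoint (reachSet F t {x}) (𝒜 \ interior U) :=
    eventually_disjoint_reachSet (h𝒜.diff isOpen_interior)
      (disjoint_sdiff_right.mono_left (hω.trans hU))
  obtain ⟨T, hT, hT0⟩ := (habsorb.and (eventually_ge_atTop 0)).exists
  have hxU : reachSet F T {x} ⊆ interior U := fun y hy => by_contra fun hyU =>
    disjoint_left.1 hT hy ⟨hpos T hT0 (reachSet_mono (singleton_subset_iff.2 hx) hy), hyU⟩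
  refine ⟨_, inter_mem self_mem_nhdsWithin
    (hF.eventually_reachSet_subset h𝒜 hpos hT0 isOpen_interior hxU), ?_⟩
  rw [← omegaLim_reachSet hT0, ← hωU]
  refine omegaLim_mono (subset_inter ?_ ((reachSet_mono inter_subset_left).trans (hpos T hT0)))
  refine iUnion₂_subset fun z hz => ?_
  have hzU : reachSet F T {z} ⊆ interior U := hz.2
  rw [reachSet, biUnion_singleton] at hzU
  exact hzU.trans interior_subset

theorem IsAttractorIn.mem_dualRepeller_of_forall_nhdsWithin (hF : Standing F) (h𝒜 : IsCompact 𝒜)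
    (hpos : PosInvariant F 𝒜) (hA : IsAttractorIn F 𝒜 A) (hx : x ∈ 𝒜)
    (h : ∀ V ∈ 𝓝[𝒜] x, ¬ omegaLim F V ⊆ A) : x ∈ dualRepeller F 𝒜 A := by
  refine mem_dualRepeller.2 ⟨hx, fun hω => ?_⟩
  obtain ⟨V, hV, hVA⟩ := hA.exists_mem_nhdsWithin_omegaLim_subset hF h𝒜 hpos hx hω
  exact h V hV hVA

theorem IsAttractorIn.isCompact_dualRepeller (hF : Standing F) (h𝒜 : IsCompact 𝒜)
    (hpos : PosInvariant F 𝒜) (hA : IsAttractorIn F 𝒜 A) : IsCompact (dualRepeller F 𝒜 A) := by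
  refine h𝒜.of_isClosed_subset (isClosed_of_closure_subset fun x hx => ?_) (sep_subset _ _)
  have hx𝒜 : x ∈ 𝒜 := closure_minimal (sep_subset _ _) h𝒜.isClosed hx
  refine hA.mem_dualRepeller_of_forall_nhdsWithin hF h𝒜 hpos hx𝒜 fun V hV hVA => ?_
  obtain ⟨W, hW, hWV⟩ := mem_nhdsWithin_iff_exists_mem_nhds_inter.1 hV
  obtain ⟨z, hzW, hz⟩ := mem_closure_iff_nhds.1 hx W hW
  exact (mem_dualRepeller.1 hz).2
    ((omegaLim_mono (singleton_subset_iff.2 (hWV ⟨hzW, hz.1⟩))).trans hVA)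

theorem IsAttractorIn.weaklyInvariant_dualRepeller (hF : Standing F) (h𝒜 : IsCompact 𝒜)
    (hinv : Invariant F 𝒜) (hA : IsAttractorIn F 𝒜 A) :
    WeaklyInvariant F (dualRepeller F 𝒜 A) := by
  rintro x ⟨hx, y, hyω, hyA⟩
  have ⟨t, p, ht, hp, hy⟩ := hyω
  choose η hη h0 hηt using fun n => mem_reachSet.1 (hp n)
  replace ht := ht.mono_left Nat.hyperfilter_le_atTop
  obtain ⟨Γ, hΓ, hΓ𝒜, hlim⟩ := hF.exists_complete_tendsto h𝒜 hinv ht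
    (Eventually.of_forall fun n => ⟨hη n, mem_singleton_iff.1 (h0 n) ▸ hx⟩)
  have hΓ0 : Γ 0 = x := tendsto_nhds_unique (hlim 0 le_rfl)
    (tendsto_const_nhds.congr fun n => (h0 n).symm)
  refine ⟨Γ, hΓ, hΓ0, range_subset_iff.2 fun s => hA.mem_dualRepeller_of_forall_nhdsWithin hF h𝒜
    hinv.posInvariant (hΓ𝒜 (mem_range_self s)) fun V hV hVA => hyA (hVA ?_)⟩
  rcases le_total s 0 with hs | hs
  · have hxs : x ∈ reachSet F (0 - s) V := hΓ0 ▸ (hΓ.mono (subset_univ _)).mem_reachSet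
      (mem_of_mem_nhdsWithin (hΓ𝒜 (mem_range_self s)) hV)
    rw [← omegaLim_reachSet (sub_nonneg.2 hs)]
    exact omegaLim_mono (singleton_subset_iff.2 hxs) hyω
  · have hηs : Tendsto (fun n => η n s) (hyperfilter ℕ) (𝓝[𝒜] Γ s) := by
      refine tendsto_nhdsWithin_iff.2 ⟨hlim s hs, ?_⟩
      filter_upwards [ht.eventually_ge_atTop s] with n hn
      exact hinv.posInvariant _ (sub_nonneg.2 hs) <|
        ((hη n).mono (Icc_subset_Icc_right hn)).mem_reachSet (mem_singleton_iff.1 (h0 n) ▸ hx)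
    refine mem_omegaLim_of_tendsto (tendsto_atTop_add_const_right _ (-s) ht) ?_
      (hy.mono_left Nat.hyperfilter_le_atTop)
    filter_upwards [hηs.eventually hV] with n hn
    exact hηt n ▸ ((hη n).mono (Icc_subset_Icc_left hs)).mem_reachSet hn

end

section

variable {F : X m → Set (X m)} {𝒜 A K : Set (X m)} {γ : ℝ → X m}

theorem alphaOf_subset (hK : IsClosed K) (hγ : range γ ⊆ K) : alphaOf γ ⊆ K :=
  fun _ ⟨_, _, hy⟩ => hK.mem_of_tendsto hy (Eventually.of_forall fun _ => hγ (mem_range_self _))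

theorem omegaOf_subset (hK : IsClosed K) (hγ : range γ ⊆ K) : omegaOf γ ⊆ K :=
  fun _ ⟨_, _, hy⟩ => hK.mem_of_tendsto hy (Eventually.of_forall fun _ => hγ (mem_range_self _))

theorem alphaOf_nonempty (hK : IsCompact K) (hγ : range γ ⊆ K) : (alphaOf γ).Nonempty := by
  obtain ⟨y, -, φ, hφ, hy⟩ := hK.tendsto_subseq (x := fun n : ℕ => γ (-n))
    fun n => hγ (mem_range_self _)
  exact ⟨y, _, tendsto_neg_atTop_atBot.comp (tendsto_natCast_atTop_atTop.comp hφ.tendsto_atTop),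
    hy⟩

theorem omegaOf_nonempty (hK : IsCompact K) (hγ : range γ ⊆ K) : (omegaOf γ).Nonempty := by
  obtain ⟨y, -, φ, hφ, hy⟩ := hK.tendsto_subseq (x := fun n : ℕ => γ n)
    fun n => hγ (mem_range_self _)
  exact ⟨y, _, tendsto_natCast_atTop_atTop.comp hφ.tendsto_atTop, hy⟩

theorem IsSolOn.omegaOf_subset_omegaLim (hγ : IsSolOn F γ univ) (s : ℝ) :
    omegaOf γ ⊆ omegaLim F {γ s} := fun _ ⟨t, ht, hy⟩ =>
  ⟨fun n => t n - s, _, tendsto_atTop_add_const_right _ _ ht,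
    fun _ => (hγ.mono (subset_univ _)).mem_reachSet (mem_singleton _), hy⟩

theorem IsSolOn.range_subset_dualRepeller (hγ : IsSolOn F γ univ) (hr : range γ ⊆ 𝒜)
    (hω : ¬ omegaOf γ ⊆ A) : range γ ⊆ dualRepeller F 𝒜 A :=
  range_subset_iff.2 fun s => mem_dualRepeller.2
    ⟨hr (mem_range_self s), fun hs => hω ((hγ.omegaOf_subset_omegaLim s).trans hs)⟩

theorem IsAttractorIn.alphaOf_subset_dualRepeller (hF : Standing F) (h𝒜 : IsCompact 𝒜)
    (hpos : PosInvariant F 𝒜) (hA : IsAttractorIn F 𝒜 A) (hγ : IsSolOn F γ univ)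
    (hr : range γ ⊆ 𝒜) (hn : ¬ range γ ⊆ A) : alphaOf γ ⊆ dualRepeller F 𝒜 A := by
  obtain ⟨_, ⟨s, rfl⟩, hs⟩ := not_subset.1 hn
  rintro y ⟨t, ht, hy⟩
  refine hA.mem_dualRepeller_of_forall_nhdsWithin hF h𝒜 hpos
    (alphaOf_subset h𝒜.isClosed hr ⟨t, ht, hy⟩) fun V hV hVA => hs (hVA ?_)
  have hyV : Tendsto (fun n => γ (t n)) atTop (𝓝[𝒜] y) :=
    tendsto_nhdsWithin_iff.2 ⟨hy, Eventually.of_forall fun n => hr (mem_range_self _)⟩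
  refine mem_omegaLim_of_tendsto (l := atTop) (t := fun n => s - t n) (p := fun _ => γ s)
    (tendsto_atTop_add_const_left _ _ (tendsto_neg_atBot_atTop.comp ht)) ?_ tendsto_const_nhds
  exact (hyV.eventually hV).mono fun n hn => (hγ.mono (subset_univ _)).mem_reachSet hn

theorem IsAttractorIn.range_subset_of_alphaOf_subset (hF : Standing F) (h𝒜 : IsCompact 𝒜)
    (hpos : PosInvariant F 𝒜) (hA : IsAttractorIn F 𝒜 A) (hγ : IsSolOn F γ univ)
    (hr : range γ ⊆ 𝒜) (hα : alphaOf γ ⊆ A) : range γ ⊆ A := by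
  by_contra hn
  obtain ⟨y, hy⟩ := alphaOf_nonempty h𝒜 hr
  exact disjoint_left.1 ((hA.invariant hF).posInvariant.disjoint_dualRepeller hA.1.isClosed)
    (hα hy) (hA.alphaOf_subset_dualRepeller hF h𝒜 hpos hγ hr hn hy)

end

theorem exists_subset_not_subset_pred {α : Type*} {A : ℕ → Set α} {S : Set α} {k : ℕ}
    (h0 : A 0 = ∅) (hS : S.Nonempty) (hk : S ⊆ A k) :
    ∃ j ∈ Icc 1 k, S ⊆ A j ∧ ¬ S ⊆ A (j - 1) := by
  induction k with
  | zero => exact absurd (subset_eq_empty hk h0) hS.ne_empty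
  | succ k ih =>
    by_cases h : S ⊆ A k
    · obtain ⟨j, hj, hSj⟩ := ih h
      exact ⟨j, ⟨hj.1, hj.2.trans k.le_succ⟩, hSj⟩
    · exact ⟨k + 1, ⟨k.succ_pos, le_rfl⟩, hk, h⟩

/-- The `k`-th Morse set of a filtration `A`: the repeller dual to `A (k - 1)` in `A k`. Relative
to the top attractor `𝒜` it is `A k ∩ dualRepeller F 𝒜 (A (k - 1))`, see `inter_dualRepeller`. -/
def morseSet (F : X m → Set (X m)) (A : ℕ → Set (X m)) (k : ℕ) : Set (X m) :=
  dualRepeller F (A k) (A (k - 1))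

namespace IsMorseFiltration

variable {F : X m → Set (X m)} {𝒜 : Set (X m)} {l i j k : ℕ} {A : ℕ → Set (X m)} {γ : ℝ → X m}

theorem mono (h : IsMorseFiltration F 𝒜 l A) (hij : i ≤ j) (hj : j ≤ l) : A i ⊆ A j := by
  induction j, hij using Nat.le_induction with
  | base => rfl
  | succ j _ ih => exact (ih (by omega)).trans (h.2.2.1 j (by omega))

theorem subset (h : IsMorseFiltration F 𝒜 l A) (hk : k ≤ l) : A k ⊆ 𝒜 := (h.2.2.2 k hk).2.1

theorem isCompact (h : IsMorseFiltration F 𝒜 l A) (hk : k ≤ l) : IsCompact (A k) :=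
  (h.2.2.2 k hk).1

theorem invariant (hF : Standing F) (h : IsMorseFiltration F 𝒜 l A) (hk : k ≤ l) :
    Invariant F (A k) := (h.2.2.2 k hk).invariant hF

theorem isAttractorIn (hF : Standing F) (h : IsMorseFiltration F 𝒜 l A) (hij : i ≤ j)
    (hj : j ≤ l) : IsAttractorIn F (A j) (A i) :=
  (h.2.2.2 i (hij.trans hj)).of_subset hF (h.mono hij hj) (h.subset hj)

theorem disjoint_morseSet (hF : Standing F) (h : IsMorseFiltration F 𝒜 l A) (hij : i < j)
    (hj : j ≤ l) : Disjoint (morseSet F A i) (morseSet F A j) := by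
  have hj' : j - 1 ≤ l := by omega
  have hsub : morseSet F A i ⊆ A (j - 1) :=
    (sep_subset _ _).trans (h.mono (Nat.le_sub_one_of_lt hij) hj')
  exact ((h.invariant hF hj').posInvariant.disjoint_dualRepeller
    (h.isCompact hj').isClosed).mono_left hsub

theorem isCompact_morseSet (hF : Standing F) (h : IsMorseFiltration F 𝒜 l A) (hk : k ≤ l) :
    IsCompact (morseSet F A k) :=
  (h.isAttractorIn hF k.pred_le hk).isCompact_dualRepeller hF (h.isCompact hk)
    (h.invariant hF hk).posInvariant

theorem weaklyInvariant_morseSet (hF : Standing F) (h : IsMorseFiltration F 𝒜 l A) (hk : k ≤ l) :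
    WeaklyInvariant F (morseSet F A k) :=
  (h.isAttractorIn hF k.pred_le hk).weaklyInvariant_dualRepeller hF (h.isCompact hk)
    (h.invariant hF hk)

theorem exists_alphaOf_subset_morseSet (hF : Standing F) (h : IsMorseFiltration F 𝒜 l A)
    (hk : k ≤ l) (hγ : IsSolOn F γ univ) (hr : range γ ⊆ A k) :
    ∃ j ∈ Icc 1 k, range γ ⊆ A j ∧ alphaOf γ ⊆ morseSet F A j := by
  obtain ⟨j, hj, hrj, hrj'⟩ := exists_subset_not_subset_pred h.1 (range_nonempty γ) hr
  have hjl : j ≤ l := hj.2.trans hk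
  exact ⟨j, hj, hrj, (h.isAttractorIn hF j.pred_le hjl).alphaOf_subset_dualRepeller hF
    (h.isCompact hjl) (h.invariant hF hjl).posInvariant hγ hrj hrj'⟩

theorem exists_omegaOf_subset_morseSet (hF : Standing F) (h : IsMorseFiltration F 𝒜 l A)
    (hk : k ≤ l) (hγ : IsSolOn F γ univ) (hr : range γ ⊆ A k) :
    ∃ i ∈ Icc 1 k, range γ ⊆ dualRepeller F (A k) (A (i - 1)) ∧ omegaOf γ ⊆ morseSet F A i := by
  have hc := h.isCompact hk
  obtain ⟨i, hi, hωi, hωi'⟩ := exists_subset_not_subset_pred h.1 (omegaOf_nonempty hc hr)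
    (omegaOf_subset hc.isClosed hr)
  have hdual := hγ.range_subset_dualRepeller hr hωi'
  have hclosed : IsClosed (dualRepeller F (A k) (A (i - 1))) :=
    ((h.isAttractorIn hF (i.pred_le.trans hi.2) hk).isCompact_dualRepeller hF hc
      (h.invariant hF hk).posInvariant).isClosed
  refine ⟨i, hi, hdual, ?_⟩
  rw [morseSet, ← inter_dualRepeller (h.mono hi.2 hk)]
  exact subset_inter hωi (omegaOf_subset hclosed hdual)

theorem range_subset_morseSet_or_connecting (hF : Standing F) (h : IsMorseFiltration F 𝒜 l A)
    (hγ : IsSolOn F γ univ) (hr : range γ ⊆ 𝒜) :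
    (∃ k, 1 ≤ k ∧ k ≤ l ∧ range γ ⊆ morseSet F A k) ∨
      ∃ i j, 1 ≤ i ∧ i < j ∧ j ≤ l ∧ alphaOf γ ⊆ morseSet F A j ∧ omegaOf γ ⊆ morseSet F A i := by
  obtain ⟨j, hj, hrj, hα⟩ := h.exists_alphaOf_subset_morseSet hF le_rfl hγ (h.2.1.symm ▸ hr)
  obtain ⟨i, hi, hdual, hω⟩ := h.exists_omegaOf_subset_morseSet hF hj.2 hγ hrj
  rcases hi.2.eq_or_lt with rfl | hij
  · exact .inl ⟨i, hi.1, hj.2, hdual⟩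
  · exact .inr ⟨i, j, hi.1, hij, hj.2, hα, hω⟩

theorem eq_iUnion_unstableSet (hF : Standing F) (h : IsMorseFiltration F 𝒜 l A) (hk : k ≤ l) :
    A k = ⋃ i ∈ Icc 1 k, unstableSet F 𝒜 (morseSet F A i) := by
  apply Subset.antisymm
  · intro x hx
    obtain ⟨γ, hγ, h0, hr⟩ := hF.weaklyInvariant_of_invariant (h.isCompact hk)
      (h.invariant hF hk) x hx
    obtain ⟨j, hj, -, hα⟩ := h.exists_alphaOf_subset_morseSet hF hk hγ hr
    exact mem_biUnion hj ⟨γ, hγ, hr.trans (h.subset hk), h0, hα⟩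
  · refine iUnion₂_subset fun i hi => ?_
    rintro x ⟨γ, hγ, hr, rfl, hα⟩
    have hil : i ≤ l := hi.2.trans hk
    have hrl : range γ ⊆ A l := h.2.1.symm ▸ hr
    have hri : range γ ⊆ A i := (h.isAttractorIn hF hil le_rfl).range_subset_of_alphaOf_subset hF
      (h.isCompact le_rfl) (h.invariant hF le_rfl).posInvariant hγ hrl (hα.trans (sep_subset _ _))
    exact h.mono hi.2 hk (hri (mem_range_self 0))

end IsMorseFiltration

theorem morse_decomposition_properties_general {m : ℕ} (F : X m → Set (X m)) (hF : Standing F)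
    (𝒜 : Set (X m)) (l : ℕ) (A M : ℕ → Set (X m)) (hfil : IsMorseFiltration F 𝒜 l A)
    (hM : ∀ k, 1 ≤ k → k ≤ l → M k = A k ∩ dualRepeller F 𝒜 (A (k - 1))) :
    (∀ k, 1 ≤ k → k ≤ l →
      IsAttractorIn F (A k) (A (k - 1)) ∧ M k = dualRepeller F (A k) (A (k - 1))) ∧
    (∀ i j, 1 ≤ i → i < j → j ≤ l → Disjoint (M i) (M j)) ∧
    (∀ k, 1 ≤ k → k ≤ l → IsCompact (M k) ∧ WeaklyInvariant F (M k)) ∧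
    (∀ γ : ℝ → X m, IsSolOn F γ univ → range γ ⊆ 𝒜 →
      (∃ k, 1 ≤ k ∧ k ≤ l ∧ range γ ⊆ M k) ∨
      (∃ i j, 1 ≤ i ∧ i < j ∧ j ≤ l ∧ alphaOf γ ⊆ M j ∧ omegaOf γ ⊆ M i)) ∧
    (∀ k, 1 ≤ k → k ≤ l → A k = ⋃ i ∈ Icc 1 k, unstableSet F 𝒜 (M i)) := by
  have hMorse : ∀ k, 1 ≤ k → k ≤ l → M k = morseSet F A k := fun k h1 hk =>
    (hM k h1 hk).trans (inter_dualRepeller (hfil.subset hk))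
  refine ⟨fun k h1 hk => ⟨hfil.isAttractorIn hF k.pred_le hk, hMorse k h1 hk⟩, ?_, ?_, ?_, ?_⟩
  · intro i j hi hij hj
    rw [hMorse i hi (hij.le.trans hj), hMorse j (hi.trans hij.le) hj]
    exact hfil.disjoint_morseSet hF hij hj
  · intro k h1 hk
    rw [hMorse k h1 hk]
    exact ⟨hfil.isCompact_morseSet hF hk, hfil.weaklyInvariant_morseSet hF hk⟩
  · intro γ hγ hr
    rcases hfil.range_subset_morseSet_or_connecting hF hγ hr with
      ⟨k, h1, hk, hrk⟩ | ⟨i, j, hi, hij, hj, hα, hω⟩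
    · exact .inl ⟨k, h1, hk, hMorse k h1 hk ▸ hrk⟩
    · exact .inr ⟨i, j, hi, hij, hj, hMorse j (hi.trans hij.le) hj ▸ hα,
        hMorse i hi (hij.le.trans hj) ▸ hω⟩
  · intro k _ hk
    rw [iUnion₂_congr fun i hi => congrArg (unstableSet F 𝒜) (hMorse i hi.1 (hi.2.trans hk))]
    exact hfil.eq_iUnion_unstableSet hF hk

/-- Theorem 2.8: structural properties of Morse decompositions:
attractor–repeller pairs, disjointness / weak invariance / compactness of Morse
sets, behaviour of complete trajectories, and recovery of the Morse filtration
via unstable sets. -/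
theorem morse_decomposition_properties {m : ℕ} (F : X m → Set (X m)) (hF : Standing F)
    (𝒜 : Set (X m)) (h𝒜 : IsAttractor F 𝒜)
    (l : ℕ) (A M : ℕ → Set (X m))
    (hfil : IsMorseFiltration F 𝒜 l A)
    (hM : ∀ k, 1 ≤ k → k ≤ l → M k = A k ∩ dualRepeller F 𝒜 (A (k-1))) :
    (∀ k, 1 ≤ k → k ≤ l →
      IsAttractorIn F (A k) (A (k-1)) ∧ M k = dualRepeller F (A k) (A (k-1))) ∧
    (∀ i j, 1 ≤ i → i < j → j ≤ l → Disjoint (M i) (M j)) ∧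
    (∀ k, 1 ≤ k → k ≤ l → IsCompact (M k) ∧ WeaklyInvariant F (M k)) ∧
    (∀ γ : ℝ → X m, IsSolOn F γ univ → range γ ⊆ 𝒜 →
      (∃ k, 1 ≤ k ∧ k ≤ l ∧ range γ ⊆ M k) ∨
      (∃ i j, 1 ≤ i ∧ i < j ∧ j ≤ l ∧ alphaOf γ ⊆ M j ∧ omegaOf γ ⊆ M i)) ∧
    (∀ k, 1 ≤ k → k ≤ l → A k = ⋃ i ∈ Icc 1 k, unstableSet F 𝒜 (M i)) :=
  morse_decomposition_properties_general F hF 𝒜 l A M hfil hM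

end DI
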